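/- (Integral energy decay for the metric coefficient A.) For every b ∈ [0, 1/2] one has ∫_{R₀}^{∞} (2/R) ∫₀^{2π} (e^{4U(R,θ)}/(4R²)) [ 2b (∂_R A)²(R,θ) + (1−2b) (∂_θ A)²(R,θ) ] dθ dR ≤ 𝓔_b(R₀) + b² 𝓔(R₀). In particular, for b ∈ (0, 1/2), ∫_{R₀}^{∞} (1/(4R³)) ∫₀^{2π} e^{4U(R,θ)} [ (∂_R A)²(R,θ) + (∂_θ A)²(R,θ) ] dθ dR < ∞. -/

import Mathlib

open Real MeasureTheory Set

/-- Partial derivative with respect to the first (time) variable `R`. -/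
noncomputable def pdR (f : ℝ → ℝ → ℝ) (R θ : ℝ) : ℝ := deriv (fun r => f r θ) R

/-- Partial derivative with respect to the second (space) variable `θ`. -/
noncomputable def pdT (f : ℝ → ℝ → ℝ) (R θ : ℝ) : ℝ := deriv (fun t => f R t) θ

/-!
Solving the two wave equations for `∂_R² U` and `∂_R² A`, multiplying them by `2 (∂_R U - b / R)`
and `e^{4U} ∂_R A / (2R²)` and adding gives a local conservation law for the `A`-effective energy
density: its `R`-derivative is the `θ`-derivative of a periodic flux minus `2 / R` times the
dissipation density `(∂_R U - b / R)² + e^{4U} / (4R²) (2b (∂_R A)² + (1 - 2b) (∂_θ A)²)`,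
which is nonnegative for `b ∈ [0, 1/2]`. Hence the `A`-effective energy is nonincreasing, and being
nonnegative it bounds the total dissipation. At `b = 1/4` both derivatives of `A` get the same
weight.
-/

open Filter Function
open scoped Topology

section PartialDerivatives

variable {f : ℝ → ℝ → ℝ} {R θ : ℝ}

lemma hasDerivAt_pdR (hf : DifferentiableAt ℝ (uncurry f) (R, θ)) :
    HasDerivAt (fun r => f r θ) (pdR f R θ) R :=
  (hf.comp (f := fun r => (r, θ)) R (by fun_prop)).hasDerivAt

lemma hasDerivAt_pdT (hf : DifferentiableAt ℝ (uncurry f) (R, θ)) :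
    HasDerivAt (f R) (pdT f R θ) θ :=
  (hf.comp (f := fun t => (R, t)) θ (by fun_prop)).hasDerivAt

lemma pdR_eq_fderiv (hf : DifferentiableAt ℝ (uncurry f) (R, θ)) :
    pdR f R θ = fderiv ℝ (uncurry f) (R, θ) (1, 0) :=
  (hf.hasFDerivAt.comp_hasDerivAt (f := fun r => (r, θ)) R
    ((hasDerivAt_id R).prodMk (hasDerivAt_const R θ))).deriv

lemma pdT_eq_fderiv (hf : DifferentiableAt ℝ (uncurry f) (R, θ)) :
    pdT f R θ = fderiv ℝ (uncurry f) (R, θ) (0, 1) :=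
  (hf.hasFDerivAt.comp_hasDerivAt (f := fun t => (R, t)) θ
    ((hasDerivAt_const θ R).prodMk (hasDerivAt_id θ))).deriv

lemma uncurry_pdR_eventuallyEq (hf : ContDiffAt ℝ 1 (uncurry f) (R, θ)) :
    uncurry (pdR f) =ᶠ[𝓝 (R, θ)] fun p => fderiv ℝ (uncurry f) p (1, 0) := by
  filter_upwards [hf.eventually (by simp)] with p hp
  exact pdR_eq_fderiv (hp.differentiableAt one_ne_zero)

lemma uncurry_pdT_eventuallyEq (hf : ContDiffAt ℝ 1 (uncurry f) (R, θ)) :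
    uncurry (pdT f) =ᶠ[𝓝 (R, θ)] fun p => fderiv ℝ (uncurry f) p (0, 1) := by
  filter_upwards [hf.eventually (by simp)] with p hp
  exact pdT_eq_fderiv (hp.differentiableAt one_ne_zero)

lemma contDiffAt_pdR {m n : WithTop ℕ∞} (hf : ContDiffAt ℝ n (uncurry f) (R, θ))
    (hmn : m + 1 ≤ n) : ContDiffAt ℝ m (uncurry (pdR f)) (R, θ) :=
  ((hf.fderiv_right hmn).clm_apply contDiffAt_const).congr_of_eventuallyEq
    (uncurry_pdR_eventuallyEq (hf.of_le (le_add_self.trans hmn)))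

lemma contDiffAt_pdT {m n : WithTop ℕ∞} (hf : ContDiffAt ℝ n (uncurry f) (R, θ))
    (hmn : m + 1 ≤ n) : ContDiffAt ℝ m (uncurry (pdT f)) (R, θ) :=
  ((hf.fderiv_right hmn).clm_apply contDiffAt_const).congr_of_eventuallyEq
    (uncurry_pdT_eventuallyEq (hf.of_le (le_add_self.trans hmn)))

lemma differentiableAt_pdR (hf : ContDiffAt ℝ 2 (uncurry f) (R, θ)) :
    DifferentiableAt ℝ (uncurry (pdR f)) (R, θ) :=
  (contDiffAt_pdR hf one_add_one_eq_two.le).differentiableAt one_ne_zero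

lemma differentiableAt_pdT (hf : ContDiffAt ℝ 2 (uncurry f) (R, θ)) :
    DifferentiableAt ℝ (uncurry (pdT f)) (R, θ) :=
  (contDiffAt_pdT hf one_add_one_eq_two.le).differentiableAt one_ne_zero

lemma pdR_pdT_comm (hf : ContDiffAt ℝ 2 (uncurry f) (R, θ)) :
    pdR (pdT f) R θ = pdT (pdR f) R θ := by
  have hf₁ : ContDiffAt ℝ 1 (uncurry f) (R, θ) := hf.of_le one_le_two
  have hfderiv : DifferentiableAt ℝ (fderiv ℝ (uncurry f)) (R, θ) :=
    (hf.fderiv_right one_add_one_eq_two.le).differentiableAt one_ne_zero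
  rw [pdR_eq_fderiv (differentiableAt_pdT hf), pdT_eq_fderiv (differentiableAt_pdR hf),
    (uncurry_pdT_eventuallyEq hf₁).fderiv_eq, (uncurry_pdR_eventuallyEq hf₁).fderiv_eq,
    fderiv_clm_apply hfderiv (differentiableAt_const _),
    fderiv_clm_apply hfderiv (differentiableAt_const _)]
  simpa using hf.isSymmSndFDerivAt (by simp) (1, 0) (0, 1)

lemma periodic_pdR {T : ℝ} (hf : ∀ᶠ r in 𝓝 R, Periodic (f r) T) : Periodic (pdR f R) T :=
  fun θ => EventuallyEq.deriv_eq (hf.mono fun _ hr => hr θ)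

lemma periodic_pdT {T : ℝ} (hf : Periodic (f R) T) : Periodic (pdT f R) T := fun θ => by
  rw [pdT, ← deriv_comp_add_const]
  exact congrArg (fun g => deriv g θ) (funext hf)

lemma contDiff_slice {n : WithTop ℕ∞} (hf : ∀ θ, ContDiffAt ℝ n (uncurry f) (R, θ)) :
    ContDiff ℝ n (f R) :=
  contDiff_iff_contDiffAt.2 fun θ => (hf θ).comp (f := fun t => (R, t)) θ (by fun_prop)

lemma contDiff_pdR_slice {m n : WithTop ℕ∞} (hf : ∀ θ, ContDiffAt ℝ n (uncurry f) (R, θ))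
    (hmn : m + 1 ≤ n) : ContDiff ℝ m (pdR f R) :=
  contDiff_slice fun θ => contDiffAt_pdR (hf θ) hmn

lemma contDiff_pdT_slice {m n : WithTop ℕ∞} (hf : ∀ θ, ContDiffAt ℝ n (uncurry f) (R, θ))
    (hmn : m + 1 ≤ n) : ContDiff ℝ m (pdT f R) :=
  contDiff_slice fun θ => contDiffAt_pdT (hf θ) hmn

end PartialDerivatives

section Integration

lemma integral_deriv_eq_zero_of_periodic {E : Type*} [NormedAddCommGroup E] [NormedSpace ℝ E]
    [CompleteSpace E] {f : ℝ → E} {T : ℝ} (hf : ContDiff ℝ 1 f)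
    (hper : Periodic f T) (a : ℝ) : ∫ x in a..a + T, deriv f x = 0 := by
  rw [intervalIntegral.integral_deriv_eq_sub (fun x _ => hf.differentiable one_ne_zero x)
    ((hf.continuous_deriv le_rfl).intervalIntegrable _ _), hper, sub_self]

lemma hasDerivAt_integral_of_contDiffAt {f : ℝ → ℝ → ℝ} {a b R : ℝ}
    (hf : ∀ θ ∈ uIcc a b, ContDiffAt ℝ 1 (uncurry f) (R, θ)) :
    HasDerivAt (fun r => ∫ θ in a..b, f r θ) (∫ θ in a..b, pdR f R θ) R := by
  obtain ⟨K, ⟨hKR, hK⟩, hfK⟩ := (compact_basis_nhds R).mem_iff.1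
    (isCompact_uIcc.eventually_forall_of_forall_eventually (P := fun r θ =>
      ContDiffAt ℝ 1 (uncurry f) (r, θ)) fun θ hθ => (hf θ hθ).eventually (by simp))
  have hcont : ∀ r ∈ K, ContinuousOn (f r) (uIcc a b) := fun r hr θ hθ =>
    (hasDerivAt_pdT ((hfK hr θ hθ).differentiableAt one_ne_zero)).continuousAt.continuousWithinAt
  have hcont_pdR : ContinuousOn (uncurry (pdR f)) (K ×ˢ uIcc a b) := fun p hp =>
    (contDiffAt_pdR (m := 0) (hfK hp.1 p.2 hp.2) (by simp)).continuousAt.continuousWithinAt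
  have hcont_pdR_slice : ContinuousOn (pdR f R) (uIcc a b) :=
    hcont_pdR.comp (f := fun θ => (R, θ)) (by fun_prop) fun θ hθ => ⟨mem_of_mem_nhds hKR, hθ⟩
  obtain ⟨C, hC⟩ := (hK.prod isCompact_uIcc).exists_bound_of_continuousOn hcont_pdR
  refine (intervalIntegral.hasDerivAt_integral_of_dominated_loc_of_deriv_le (bound := fun _ => C)
    hKR ?_ (hcont R (mem_of_mem_nhds hKR)).intervalIntegrable
    hcont_pdR_slice.intervalIntegrable.def'.aestronglyMeasurable ?_
    intervalIntegrable_const ?_).2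
  · filter_upwards [hKR] with r hr
    exact (hcont r hr).intervalIntegrable.def'.aestronglyMeasurable
  · exact .of_forall fun θ hθ r hr => hC (r, θ) ⟨hr, uIoc_subset_uIcc hθ⟩
  · exact .of_forall fun θ hθ r hr =>
      hasDerivAt_pdR ((hfK hr θ (uIoc_subset_uIcc hθ)).differentiableAt one_ne_zero)

lemma lintegral_neg_deriv_le {g g' : ℝ → ℝ} {a : ℝ} (hcont : ContinuousWithinAt g (Ici a) a)
    (hderiv : ∀ x ∈ Ioi a, HasDerivAt g (g' x) x) (hg' : ∀ x ∈ Ioi a, g' x ≤ 0)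
    (hg : ∀ x ∈ Ici a, 0 ≤ g x) :
    ∫⁻ x in Ioi a, ENNReal.ofReal (-g' x) ≤ ENNReal.ofReal (g a) := by
  have hcontOn : ContinuousOn g (Ici a) := fun x hx => by
    rcases (mem_Ici.1 hx).eq_or_lt with rfl | hx
    exacts [hcont, (hderiv x hx).continuousAt.continuousWithinAt]
  have hanti : AntitoneOn g (Ici a) :=
    antitoneOn_of_hasDerivWithinAt_nonpos (convex_Ici a) hcontOn
      (fun x hx => (hderiv x (by simpa using hx)).hasDerivWithinAt)
      (fun x hx => hg' x (by simpa using hx))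
  have hlim : Tendsto g atTop (𝓝 (⨅ x : Ici a, g x)) :=
    tendsto_comp_val_Ici_atTop.1 <| tendsto_atTop_ciInf (antitoneOn_iff_antitone.1 hanti)
      ⟨0, forall_mem_range.2 fun x => hg x x.2⟩
  have hlim_nonneg : 0 ≤ ⨅ x : Ici a, g x := Real.iInf_nonneg fun x => hg x x.2
  rw [← ofReal_integral_eq_lintegral_ofReal (f := fun x => -g' x)
      (integrableOn_Ioi_deriv_of_nonpos hcont hderiv hg' hlim).neg
      (ae_restrict_of_forall_mem measurableSet_Ioi fun x hx => neg_nonneg.2 (hg' x hx)),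
    integral_neg, integral_Ioi_of_hasDerivAt_of_nonpos hcont hderiv hg' hlim]
  exact ENNReal.ofReal_le_ofReal (by linarith)

end Integration

/-- `U` and `A` solve the Gowdy wave equations on `[R₀, ∞) × ℝ`, are of class `C²` in a
neighbourhood of this half-plane (so that the two-sided derivatives `pdR` make sense at `R₀`), and
are `T`-periodic in `θ`. -/
structure IsGowdySolution (U A : ℝ → ℝ → ℝ) (R₀ T : ℝ) : Prop where
  pos : 0 < R₀
  contDiffAt_U : ∀ R, R₀ ≤ R → ∀ θ, ContDiffAt ℝ 2 (uncurry U) (R, θ)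
  contDiffAt_A : ∀ R, R₀ ≤ R → ∀ θ, ContDiffAt ℝ 2 (uncurry A) (R, θ)
  periodic_U : ∀ R, R₀ ≤ R → Periodic (U R) T
  periodic_A : ∀ R, R₀ ≤ R → Periodic (A R) T
  wave_U : ∀ R, R₀ ≤ R → ∀ θ,
    pdR (fun r t => r * pdR U r t) R θ - pdT (fun r t => r * pdT U r t) R θ
      = exp (4 * U R θ) / (2 * R) * (pdR A R θ ^ 2 - pdT A R θ ^ 2)
  wave_A : ∀ R, R₀ ≤ R → ∀ θ,
    pdR (fun r t => r⁻¹ * pdR A r t) R θ - pdT (fun r t => r⁻¹ * pdT A r t) R θ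
      = 4 / R * (-(pdR U R θ * pdR A R θ) + pdT U R θ * pdT A R θ)

/-- The integrand of the `A`-effective energy `𝓔_b`. -/
noncomputable def effectiveEnergyDensity (U A : ℝ → ℝ → ℝ) (b R θ : ℝ) : ℝ :=
  (pdR U R θ - b / R) ^ 2 + pdT U R θ ^ 2
    + exp (4 * U R θ) / (4 * R ^ 2) * (pdR A R θ ^ 2 + pdT A R θ ^ 2)

/-- The `A`-effective energy `𝓔_b(R)`, over one period `[0, T]` in `θ`. -/
noncomputable def effectiveEnergy (U A : ℝ → ℝ → ℝ) (T b R : ℝ) : ℝ :=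
  ∫ θ in 0..T, effectiveEnergyDensity U A b R θ

/-- The flux in the `θ`-direction of the `A`-effective energy density. -/
noncomputable def effectiveFlux (U A : ℝ → ℝ → ℝ) (b R θ : ℝ) : ℝ :=
  2 * ((pdR U R θ - b / R) * pdT U R θ)
    + exp (4 * U R θ) / (2 * R ^ 2) * (pdR A R θ * pdT A R θ)

/-- The density whose `2 / R`-multiple is the rate of loss of `A`-effective energy. -/
noncomputable def effectiveDissipation (U A : ℝ → ℝ → ℝ) (b R θ : ℝ) : ℝ :=
  (pdR U R θ - b / R) ^ 2
    + exp (4 * U R θ) / (4 * R ^ 2) * (2 * b * pdR A R θ ^ 2 + (1 - 2 * b) * pdT A R θ ^ 2)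

section Densities

variable {U A : ℝ → ℝ → ℝ} {b R θ : ℝ}

lemma effectiveEnergyDensity_nonneg : 0 ≤ effectiveEnergyDensity U A b R θ := by
  unfold effectiveEnergyDensity
  positivity

lemma effectiveDissipation_nonneg (hb : b ∈ Icc (0 : ℝ) (1 / 2)) :
    0 ≤ effectiveDissipation U A b R θ := by
  have hb₀ : 0 ≤ b := hb.1
  have hb₁ : 0 ≤ 1 - 2 * b := by linarith [hb.2]
  unfold effectiveDissipation
  positivity

lemma contDiffAt_effectiveEnergyDensity {m n : WithTop ℕ∞} (hmn : m + 1 ≤ n) (hR : R ≠ 0)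
    (hU : ContDiffAt ℝ n (uncurry U) (R, θ)) (hA : ContDiffAt ℝ n (uncurry A) (R, θ)) :
    ContDiffAt ℝ m (uncurry (effectiveEnergyDensity U A b)) (R, θ) := by
  have hU₀ := hU.of_le (le_self_add.trans hmn)
  have hUR := contDiffAt_pdR hU hmn
  have hUT := contDiffAt_pdT hU hmn
  have hAR := contDiffAt_pdR hA hmn
  have hAT := contDiffAt_pdT hA hmn
  change ContDiffAt ℝ m (fun p : ℝ × ℝ => (uncurry (pdR U) p - b / p.1) ^ 2 + uncurry (pdT U) p ^ 2
    + exp (4 * uncurry U p) / (4 * p.1 ^ 2)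
      * (uncurry (pdR A) p ^ 2 + uncurry (pdT A) p ^ 2)) (R, θ)
  fun_prop (disch := simpa using hR)

lemma pdR_effectiveEnergyDensity (hR : R ≠ 0) (hU : ContDiffAt ℝ 2 (uncurry U) (R, θ))
    (hA : ContDiffAt ℝ 2 (uncurry A) (R, θ)) :
    pdR (effectiveEnergyDensity U A b) R θ =
      2 * (pdR U R θ - b / R) * (pdR (pdR U) R θ + b / R ^ 2)
        + 2 * pdT U R θ * pdT (pdR U) R θ
        + exp (4 * U R θ) / (4 * R ^ 2) * ((4 * pdR U R θ - 2 / R) * (pdR A R θ ^ 2 + pdT A R θ ^ 2)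
          + 2 * pdR A R θ * pdR (pdR A) R θ + 2 * pdT A R θ * pdT (pdR A) R θ) := by
  have dU := hasDerivAt_pdR (hU.differentiableAt two_ne_zero)
  have dUR := hasDerivAt_pdR (differentiableAt_pdR hU)
  have dUT := hasDerivAt_pdR (differentiableAt_pdT hU)
  have dAR := hasDerivAt_pdR (differentiableAt_pdR hA)
  have dAT := hasDerivAt_pdR (differentiableAt_pdT hA)
  rw [pdR_pdT_comm hU] at dUT
  rw [pdR_pdT_comm hA] at dAT
  have dweight := (dU.const_mul 4).exp.div (((hasDerivAt_id R).pow 2).const_mul 4)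
    (by simpa using hR)
  have dinv := (hasDerivAt_const R b).div (hasDerivAt_id R) hR
  refine (((dUR.sub dinv).pow 2).add (dUT.pow 2) |>.add
    (dweight.mul ((dAR.pow 2).add (dAT.pow 2)))).deriv.trans ?_
  simp only [Nat.cast_ofNat, Pi.sub_apply, Pi.div_apply, id_eq, Nat.add_one_sub_one, pow_one,
    zero_mul, mul_one, zero_sub, Pi.pow_apply, Pi.add_apply]
  field_simp
  ring

lemma pdT_effectiveFlux (hU : ContDiffAt ℝ 2 (uncurry U) (R, θ))
    (hA : ContDiffAt ℝ 2 (uncurry A) (R, θ)) :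
    pdT (effectiveFlux U A b) R θ =
      2 * (pdT (pdR U) R θ * pdT U R θ + (pdR U R θ - b / R) * pdT (pdT U) R θ)
        + exp (4 * U R θ) / (2 * R ^ 2) * (4 * pdT U R θ * (pdR A R θ * pdT A R θ)
          + pdT (pdR A) R θ * pdT A R θ + pdR A R θ * pdT (pdT A) R θ) := by
  have dU := hasDerivAt_pdT (hU.differentiableAt two_ne_zero)
  have dUR := hasDerivAt_pdT (differentiableAt_pdR hU)
  have dUT := hasDerivAt_pdT (differentiableAt_pdT hU)
  have dAR := hasDerivAt_pdT (differentiableAt_pdR hA)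
  have dAT := hasDerivAt_pdT (differentiableAt_pdT hA)
  refine ((((dUR.sub_const (b / R)).mul dUT).const_mul 2).add
    (((dU.const_mul 4).exp.div_const (2 * R ^ 2)).mul (dAR.mul dAT))).deriv.trans ?_
  simp only [Pi.mul_apply, add_right_inj]
  ring

end Densities

namespace IsGowdySolution

variable {U A : ℝ → ℝ → ℝ} {R₀ T b R θ : ℝ}

lemma pdR_pdR_U (h : IsGowdySolution U A R₀ T) (hR : R₀ ≤ R) :
    pdR (pdR U) R θ = pdT (pdT U) R θ - pdR U R θ / R
      + exp (4 * U R θ) / (2 * R ^ 2) * (pdR A R θ ^ 2 - pdT A R θ ^ 2) := by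
  have hR' : R ≠ 0 := (h.pos.trans_le hR).ne'
  have hpdR : pdR (fun r t => r * pdR U r t) R θ = 1 * pdR U R θ + R * pdR (pdR U) R θ :=
    ((hasDerivAt_id R).mul
      (hasDerivAt_pdR (differentiableAt_pdR (h.contDiffAt_U R hR θ)))).deriv
  have hpdT : pdT (fun r t => r * pdT U r t) R θ = R * pdT (pdT U) R θ :=
    deriv_const_mul_field R
  have hwave := h.wave_U R hR θ
  rw [hpdR, hpdT] at hwave
  field_simp at hwave ⊢
  linear_combination hwave

lemma pdR_pdR_A (h : IsGowdySolution U A R₀ T) (hR : R₀ ≤ R) :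
    pdR (pdR A) R θ = pdT (pdT A) R θ + pdR A R θ / R
      + 4 * (-(pdR U R θ * pdR A R θ) + pdT U R θ * pdT A R θ) := by
  have hR' : R ≠ 0 := (h.pos.trans_le hR).ne'
  have hpdR : pdR (fun r t => r⁻¹ * pdR A r t) R θ =
      -(R ^ 2)⁻¹ * pdR A R θ + R⁻¹ * pdR (pdR A) R θ :=
    ((hasDerivAt_inv hR').mul
      (hasDerivAt_pdR (differentiableAt_pdR (h.contDiffAt_A R hR θ)))).deriv
  have hpdT : pdT (fun r t => r⁻¹ * pdT A r t) R θ = R⁻¹ * pdT (pdT A) R θ :=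
    deriv_const_mul_field R⁻¹
  have hwave := h.wave_A R hR θ
  rw [hpdR, hpdT] at hwave
  field_simp at hwave ⊢
  linear_combination hwave

lemma pdR_effectiveEnergyDensity_eq_pdT_sub (h : IsGowdySolution U A R₀ T) (hR : R₀ ≤ R) :
    pdR (effectiveEnergyDensity U A b) R θ =
      pdT (effectiveFlux U A b) R θ - 2 / R * effectiveDissipation U A b R θ := by
  have hU := h.contDiffAt_U R hR θ
  have hA := h.contDiffAt_A R hR θ
  rw [pdR_effectiveEnergyDensity (h.pos.trans_le hR).ne' hU hA, pdT_effectiveFlux hU hA,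
    effectiveDissipation]
  linear_combination 2 * (pdR U R θ - b / R) * h.pdR_pdR_U hR (θ := θ)
    + exp (4 * U R θ) / (2 * R ^ 2) * pdR A R θ * h.pdR_pdR_A hR (θ := θ)

lemma contDiff_effectiveFlux (h : IsGowdySolution U A R₀ T) (hR : R₀ ≤ R) :
    ContDiff ℝ 1 (effectiveFlux U A b R) := by
  have hU := (contDiff_slice (h.contDiffAt_U R hR)).of_le one_le_two
  have hUR := contDiff_pdR_slice (h.contDiffAt_U R hR) one_add_one_eq_two.le
  have hUT := contDiff_pdT_slice (h.contDiffAt_U R hR) one_add_one_eq_two.le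
  have hAR := contDiff_pdR_slice (h.contDiffAt_A R hR) one_add_one_eq_two.le
  have hAT := contDiff_pdT_slice (h.contDiffAt_A R hR) one_add_one_eq_two.le
  unfold effectiveFlux
  fun_prop

lemma continuous_effectiveDissipation (h : IsGowdySolution U A R₀ T) (hR : R₀ ≤ R) :
    Continuous (effectiveDissipation U A b R) := by
  have hU := (contDiff_slice (h.contDiffAt_U R hR)).continuous
  have hUR := (contDiff_pdR_slice (h.contDiffAt_U R hR) one_add_one_eq_two.le).continuous
  have hAR := (contDiff_pdR_slice (h.contDiffAt_A R hR) one_add_one_eq_two.le).continuous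
  have hAT := (contDiff_pdT_slice (h.contDiffAt_A R hR) one_add_one_eq_two.le).continuous
  unfold effectiveDissipation
  fun_prop

lemma periodic_effectiveFlux (h : IsGowdySolution U A R₀ T) (hR : R₀ < R) :
    Periodic (effectiveFlux U A b R) T := fun θ => by
  have hnhds : ∀ᶠ r in 𝓝 R, R₀ ≤ r := Ici_mem_nhds hR
  simp only [effectiveFlux, h.periodic_U R hR.le θ, periodic_pdT (h.periodic_U R hR.le) θ,
    periodic_pdT (h.periodic_A R hR.le) θ, periodic_pdR (hnhds.mono h.periodic_U) θ,
    periodic_pdR (hnhds.mono h.periodic_A) θ]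

lemma hasDerivAt_effectiveEnergy_integral_pdR (h : IsGowdySolution U A R₀ T) (hR : R₀ ≤ R) :
    HasDerivAt (effectiveEnergy U A T b)
      (∫ θ in 0..T, pdR (effectiveEnergyDensity U A b) R θ) R :=
  hasDerivAt_integral_of_contDiffAt fun θ _ =>
    contDiffAt_effectiveEnergyDensity one_add_one_eq_two.le (h.pos.trans_le hR).ne'
      (h.contDiffAt_U R hR θ) (h.contDiffAt_A R hR θ)

lemma hasDerivAt_effectiveEnergy (h : IsGowdySolution U A R₀ T) (hR : R₀ < R) :
    HasDerivAt (effectiveEnergy U A T b)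
      (-(2 / R * ∫ θ in 0..T, effectiveDissipation U A b R θ)) R := by
  refine (h.hasDerivAt_effectiveEnergy_integral_pdR hR.le).congr_deriv ?_
  have hflux := h.contDiff_effectiveFlux (b := b) hR.le
  have hflux_int : IntervalIntegrable (pdT (effectiveFlux U A b) R) volume 0 T :=
    (hflux.continuous_deriv le_rfl).intervalIntegrable _ _
  have hflux_zero : ∫ θ in 0..T, pdT (effectiveFlux U A b) R θ = 0 := by
    simpa only [pdT, zero_add] using
      integral_deriv_eq_zero_of_periodic hflux (h.periodic_effectiveFlux hR) 0
  simp only [h.pdR_effectiveEnergyDensity_eq_pdT_sub hR.le]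
  rw [intervalIntegral.integral_sub hflux_int
    (((h.continuous_effectiveDissipation hR.le).const_mul _).intervalIntegrable _ _),
    hflux_zero, zero_sub, intervalIntegral.integral_const_mul]

lemma lintegral_effectiveDissipation_le (h : IsGowdySolution U A R₀ T) (hT : 0 ≤ T)
    (hb : b ∈ Icc (0 : ℝ) (1 / 2)) :
    ∫⁻ R in Ioi R₀, ENNReal.ofReal (2 / R * ∫ θ in 0..T, effectiveDissipation U A b R θ)
      ≤ ENNReal.ofReal (effectiveEnergy U A T b R₀) := by
  have hdissipation : ∀ R, R₀ < R → 0 ≤ 2 / R * ∫ θ in 0..T, effectiveDissipation U A b R θ :=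
    fun R hR => mul_nonneg (div_nonneg zero_le_two (h.pos.trans hR).le)
      (intervalIntegral.integral_nonneg hT fun _ _ => effectiveDissipation_nonneg hb)
  simpa only [neg_neg] using lintegral_neg_deriv_le
    (h.hasDerivAt_effectiveEnergy_integral_pdR le_rfl).continuousAt.continuousWithinAt
    (fun R hR => h.hasDerivAt_effectiveEnergy hR)
    (fun R hR => neg_nonpos.2 (hdissipation R hR))
    (fun R _ => intervalIntegral.integral_nonneg hT fun _ _ => effectiveEnergyDensity_nonneg)

lemma lintegral_dissipation_A_le (h : IsGowdySolution U A R₀ T) (hT : 0 ≤ T)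
    (hb : b ∈ Icc (0 : ℝ) (1 / 2)) :
    ∫⁻ R in Ioi R₀, ENNReal.ofReal (2 / R * ∫ θ in 0..T, exp (4 * U R θ) / (4 * R ^ 2)
        * (2 * b * pdR A R θ ^ 2 + (1 - 2 * b) * pdT A R θ ^ 2))
      ≤ ENNReal.ofReal (effectiveEnergy U A T b R₀) := by
  refine (setLIntegral_mono' measurableSet_Ioi fun R hR => ENNReal.ofReal_le_ofReal ?_).trans
    (h.lintegral_effectiveDissipation_le hT hb)
  have hRpos : 0 < R := h.pos.trans hR
  have hb₀ : 0 ≤ b := hb.1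
  have hb₁ : 0 ≤ 1 - 2 * b := by linarith [hb.2]
  gcongr
  rw [intervalIntegral.integral_of_le hT, intervalIntegral.integral_of_le hT]
  exact integral_mono_of_nonneg (.of_forall fun θ => by positivity)
    (h.continuous_effectiveDissipation hR.le).integrableOn_Ioc
    (.of_forall fun θ => le_add_of_nonneg_left (sq_nonneg _))

lemma lintegral_energy_A_lt_top (h : IsGowdySolution U A R₀ T) (hT : 0 ≤ T) :
    ∫⁻ R in Ioi R₀, ENNReal.ofReal (1 / (4 * R ^ 3) *
      ∫ θ in 0..T, exp (4 * U R θ) * (pdR A R θ ^ 2 + pdT A R θ ^ 2)) < ⊤ := by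
  refine lt_of_eq_of_lt (lintegral_congr fun R => ?_) <|
    (h.lintegral_dissipation_A_le hT (b := 1 / 4) (by norm_num)).trans_lt ENNReal.ofReal_lt_top
  simp only [← intervalIntegral.integral_const_mul]
  congr! 3 with θ
  ring

end IsGowdySolution

theorem stmt6_general {U A : ℝ → ℝ → ℝ} {R₀ T : ℝ} (h : IsGowdySolution U A R₀ T) (hT : 0 ≤ T) :
    (∀ b ∈ Icc (0 : ℝ) (1 / 2),
      ∫⁻ R in Ioi R₀, ENNReal.ofReal (2 / R * ∫ θ in 0..T, exp (4 * U R θ) / (4 * R ^ 2)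
          * (2 * b * pdR A R θ ^ 2 + (1 - 2 * b) * pdT A R θ ^ 2))
        ≤ ENNReal.ofReal (effectiveEnergy U A T b R₀))
    ∧ ∫⁻ R in Ioi R₀, ENNReal.ofReal (1 / (4 * R ^ 3) *
      ∫ θ in 0..T, exp (4 * U R θ) * (pdR A R θ ^ 2 + pdT A R θ ^ 2)) < ⊤ :=
  ⟨fun _ hb => h.lintegral_dissipation_A_le hT hb, h.lintegral_energy_A_lt_top hT⟩

theorem stmt6
    (R₀ : ℝ) (hR₀ : 0 < R₀)
    (U A : ℝ → ℝ → ℝ)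
    (hU : ContDiff ℝ (⊤ : ℕ∞) (Function.uncurry U))
    (hA : ContDiff ℝ (⊤ : ℕ∞) (Function.uncurry A))
    (hUper : ∀ R θ, U R (θ + 2 * π) = U R θ)
    (hAper : ∀ R θ, A R (θ + 2 * π) = A R θ)
    (eqU : ∀ R, R₀ ≤ R → ∀ θ : ℝ,
      deriv (fun r => r * pdR U r θ) R - deriv (fun t => R * pdT U R t) θ
        = exp (4 * U R θ) / (2 * R) * ((pdR A R θ) ^ 2 - (pdT A R θ) ^ 2))
    (eqA : ∀ R, R₀ ≤ R → ∀ θ : ℝ,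
      deriv (fun r => r⁻¹ * pdR A r θ) R - deriv (fun t => R⁻¹ * pdT A R t) θ
        = 4 / R * (-(pdR U R θ * pdR A R θ) + pdT U R θ * pdT A R θ))
    (E : ℝ → ℝ)
    (hE : ∀ R, E R = ∫ θ in (0:ℝ)..(2 * π),
      (pdR U R θ) ^ 2 + (pdT U R θ) ^ 2
        + exp (4 * U R θ) / (4 * R ^ 2) * ((pdR A R θ) ^ 2 + (pdT A R θ) ^ 2))
    (Eb : ℝ → ℝ → ℝ)
    (hEb : ∀ b R, Eb b R = ∫ θ in (0:ℝ)..(2 * π),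
      (pdR U R θ - b / R) ^ 2 + (pdT U R θ) ^ 2
        + exp (4 * U R θ) / (4 * R ^ 2) * ((pdR A R θ) ^ 2 + (pdT A R θ) ^ 2))
 :
    (∀ b ∈ Set.Icc (0:ℝ) (1/2),
      ∫⁻ R in Set.Ioi R₀, ENNReal.ofReal (2 / R * ∫ θ in (0:ℝ)..(2 * π),
          exp (4 * U R θ) / (4 * R ^ 2)
            * (2 * b * (pdR A R θ) ^ 2 + (1 - 2 * b) * (pdT A R θ) ^ 2))
        ≤ ENNReal.ofReal (Eb b R₀ + b ^ 2 * E R₀))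
    ∧ ∀ b ∈ Set.Ioo (0:ℝ) (1/2),
      ∫⁻ R in Set.Ioi R₀, ENNReal.ofReal (1 / (4 * R ^ 3) * ∫ θ in (0:ℝ)..(2 * π),
          exp (4 * U R θ) * ((pdR A R θ) ^ 2 + (pdT A R θ) ^ 2)) < ⊤ := by
  have h := stmt6_general (T := 2 * π) ⟨hR₀, fun _ _ _ => (contDiff_infty.1 hU 2).contDiffAt,
    fun _ _ _ => (contDiff_infty.1 hA 2).contDiffAt, fun R _ => hUper R, fun R _ => hAper R,
    eqU, eqA⟩ two_pi_pos.le
  have hE_nonneg : 0 ≤ E R₀ := hE R₀ ▸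
    intervalIntegral.integral_nonneg two_pi_pos.le fun θ _ => by positivity
  refine ⟨fun b hb => (h.1 b hb).trans (ENNReal.ofReal_le_ofReal ?_), fun _ _ => h.2⟩
  exact (hEb b R₀).ge.trans (le_add_of_nonneg_right (mul_nonneg (sq_nonneg b) hE_nonneg))
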